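/- Let n be a positive integer and M a non-zero finite R-module with grade_R(M) ≥ n. Then T_n^C(M) = Tr_C(Ω^{n-1}M) is a reduced G_C-perfect R-module of G_C-dimension n. Moreover, in the case C = R, T_n^R(M) has projective dimension n. -/

import Mathlib

open CategoryTheory TensorProduct

noncomputable section

universe u

variable (R : Type u) [CommRing R]

/-- The `i`-th Ext module `Ext_R^i(M, N)`. -/
def ExtM (M N : ModuleCat.{u} R) (i : ℕ) : ModuleCat.{u} R :=
  ((Ext R (ModuleCat.{u} R) i).obj (Opposite.op M)).obj N

/-- The `i`-th Tor module `Tor_i^R(M, N)`. -/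
def TorM (M N : ModuleCat.{u} R) (i : ℕ) : ModuleCat.{u} R :=
  ((Tor (ModuleCat.{u} R) i).obj M).obj N

/-- The biduality (evaluation) map `M → Hom_R(Hom_R(M, C), C)`. -/
def bidualityMap (C M : ModuleCat.{u} R) :
    ↥M →ₗ[R] ((↥M →ₗ[R] ↥C) →ₗ[R] ↥C) :=
  (LinearMap.id : (↥M →ₗ[R] ↥C) →ₗ[R] (↥M →ₗ[R] ↥C)).flip

/-- `C` is a semidualizing `R`-module. -/
def IsSemidualizing (C : ModuleCat.{u} R) : Prop :=
  Module.Finite R ↥C ∧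
  Function.Bijective (fun r : R => (r • LinearMap.id : ↥C →ₗ[R] ↥C)) ∧
  ∀ i : ℕ, 0 < i → Subsingleton (ExtM R C C i)

/-- `M` is totally `C`-reflexive. -/
def IsTotallyCReflexive (C M : ModuleCat.{u} R) : Prop :=
  Module.Finite R ↥M ∧
  Function.Bijective (bidualityMap R C M) ∧
  (∀ i : ℕ, 0 < i → Subsingleton (ExtM R M C i)) ∧
  (∀ i : ℕ, 0 < i → Subsingleton (ExtM R (ModuleCat.of R (↥M →ₗ[R] ↥C)) C i))

/-- `G_C`-dimension of `M` is at most `n`: there is an exact sequence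
`0 → X_n → ⋯ → X_0 → M → 0` with each `X_i` totally `C`-reflexive. -/
def gcdimLE (C : ModuleCat.{u} R) : ℕ → ModuleCat.{u} R → Prop
  | 0, M => IsTotallyCReflexive R C M
  | n+1, M => ∃ (X K : ModuleCat.{u} R) (f : ↥K →ₗ[R] ↥X) (g : ↥X →ₗ[R] ↥M),
      Function.Injective f ∧ Function.Surjective g ∧
      LinearMap.ker g = LinearMap.range f ∧
      IsTotallyCReflexive R C X ∧ gcdimLE C n K

/-- The `G_C`-dimension of `M`, as an element of `ℕ∞`. -/
def gcdim (C M : ModuleCat.{u} R) : ℕ∞ :=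
  sInf ((fun n : ℕ => (n : ℕ∞)) '' {n | gcdimLE R C n M})

/-- `grade_R(M) = inf { i | Ext_R^i(M, R) ≠ 0 }`, with `grade 0 = ∞`. -/
def gradeR (M : ModuleCat.{u} R) : ℕ∞ :=
  sInf ((fun i : ℕ => (i : ℕ∞)) ''
    {i | ¬ Subsingleton (ExtM R M (ModuleCat.of R R) i)})

/-- Reduced grade of `M` with respect to `C`. -/
def rgrade (C M : ModuleCat.{u} R) : ℕ∞ :=
  sInf ((fun i : ℕ => (i : ℕ∞)) ''
    {i | 0 < i ∧ ¬ Subsingleton (ExtM R M C i)})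

/-- `M` is reduced `G_C`-perfect. -/
def IsReducedGCPerfect (C M : ModuleCat.{u} R) : Prop :=
  gcdim R C M ≠ ⊤ ∧ rgrade R C M = gcdim R C M

/-- `M` is `G_C`-perfect. -/
def IsGCPerfect (C M : ModuleCat.{u} R) : Prop :=
  gcdim R C M ≠ ⊤ ∧ gradeR R M = gcdim R C M

/-- `π : P → M` is a projective cover: `P` projective, `π` surjective with superfluous kernel. -/
def IsProjectiveCover {P M : ModuleCat.{u} R} (π : ↥P →ₗ[R] ↥M) : Prop :=
  Module.Projective R ↥P ∧ Function.Surjective π ∧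
  ∀ N : Submodule R ↥P, N ⊔ LinearMap.ker π = ⊤ → N = ⊤

/-- `P₁ →d P₀ →π M → 0` is a minimal projective presentation of `M`. -/
def IsMinimalPresentation {P1 P0 M : ModuleCat.{u} R}
    (d : ↥P1 →ₗ[R] ↥P0) (π : ↥P0 →ₗ[R] ↥M) : Prop :=
  Module.Finite R ↥P1 ∧ Module.Finite R ↥P0 ∧
  IsProjectiveCover R π ∧
  LinearMap.range d = LinearMap.ker π ∧
  Module.Projective R ↥P1 ∧
  ∀ N : Submodule R ↥P1, N ⊔ LinearMap.ker d = ⊤ → N = ⊤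

/-- `T` is (a module isomorphic to) the transpose `Tr_C(M)` of `M` with respect to `C`,
computed from a minimal projective presentation of `M`. -/
def IsTransposeC (C M T : ModuleCat.{u} R) : Prop :=
  ∃ (P1 P0 : ModuleCat.{u} R) (d : ↥P1 →ₗ[R] ↥P0) (π : ↥P0 →ₗ[R] ↥M),
    IsMinimalPresentation R d π ∧
    Nonempty (↥T ≃ₗ[R]
      ((↥P1 →ₗ[R] ↥C) ⧸ LinearMap.range (LinearMap.lcomp R ↥C d)))

/-- `T` is the usual Auslander transpose `Tr(M) = Tr_R(M)`. -/
def IsTranspose (M T : ModuleCat.{u} R) : Prop :=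
  IsTransposeC R (ModuleCat.of R R) M T

/-- `S` is (a module isomorphic to) the first syzygy `Ω N`, i.e. the kernel of a
projective cover of `N`. -/
def IsSyzygyOf (N S : ModuleCat.{u} R) : Prop :=
  ∃ (P : ModuleCat.{u} R) (π : ↥P →ₗ[R] ↥N),
    Module.Finite R ↥P ∧ IsProjectiveCover R π ∧
    Nonempty (↥S ≃ₗ[R] LinearMap.ker π)

/-- `S` is (a module isomorphic to) the `n`-th syzygy `Ωⁿ M`. -/
def IsNthSyzygy : ℕ → ModuleCat.{u} R → ModuleCat.{u} R → Prop
  | 0, M, S => Nonempty (↥S ≃ₗ[R] ↥M)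
  | n+1, M, S => ∃ K : ModuleCat.{u} R, IsNthSyzygy n M K ∧ IsSyzygyOf R K S

/-- `L` is (a module isomorphic to) `λ M = Ω Tr M`. -/
def IsLambda (M L : ModuleCat.{u} R) : Prop :=
  ∃ T : ModuleCat.{u} R, IsTranspose R M T ∧ IsSyzygyOf R T L

/-- `M` is horizontally linked, i.e. `M ≅ λλM`. -/
def IsHorizontallyLinked (M : ModuleCat.{u} R) : Prop :=
  ∃ L L2 : ModuleCat.{u} R, IsLambda R M L ∧ IsLambda R L L2 ∧
    Nonempty (↥M ≃ₗ[R] ↥L2)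

/-- `M` is stable: it has no non-zero projective direct summand. -/
def IsStable (M : ModuleCat.{u} R) : Prop :=
  ∀ (P N : ModuleCat.{u} R), Module.Projective R ↥P →
    Nonempty (↥M ≃ₗ[R] (↥P × ↥N)) → Subsingleton ↥P

/-- `N` belongs to the Auslander class `A_C`. -/
def MemAuslanderClass (C N : ModuleCat.{u} R) : Prop :=
  Function.Bijective (TensorProduct.mk R ↥N ↥C) ∧
  (∀ i : ℕ, 0 < i → Subsingleton (TorM R C N i)) ∧
  (∀ i : ℕ, 0 < i → Subsingleton
    (ExtM R C (ModuleCat.of R (↥N ⊗[R] ↥C)) i))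

/-- `R` is semiperfect: every finite `R`-module has a projective cover. -/
def IsSemiperfectRing : Prop :=
  ∀ M : ModuleCat.{u} R, Module.Finite R ↥M →
    ∃ (P : ModuleCat.{u} R) (π : ↥P →ₗ[R] ↥M),
      Module.Finite R ↥P ∧ IsProjectiveCover R π

/-- Depth over a local ring, via Ext from the residue field. -/
def rdepth [IsLocalRing R] (M : ModuleCat.{u} R) : ℕ∞ :=
  sInf ((fun i : ℕ => (i : ℕ∞)) ''
    {i | ¬ Subsingleton
      (ExtM R (ModuleCat.of R (IsLocalRing.ResidueField R)) M i)})

/-- Projective dimension at most `n`. -/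
def pdimLE : ℕ → ModuleCat.{u} R → Prop
  | 0, M => Module.Projective R ↥M
  | n+1, M => ∃ (X K : ModuleCat.{u} R) (f : ↥K →ₗ[R] ↥X) (g : ↥X →ₗ[R] ↥M),
      Function.Injective f ∧ Function.Surjective g ∧
      LinearMap.ker g = LinearMap.range f ∧
      Module.Projective R ↥X ∧ pdimLE n K

/-- Projective dimension, as an element of `ℕ∞`. -/
def pdim (M : ModuleCat.{u} R) : ℕ∞ :=
  sInf ((fun n : ℕ => (n : ℕ∞)) '' {n | pdimLE R n M})

/-- `M` is `C`-`k`-torsionless. -/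
def IsCkTorsionless (C M : ModuleCat.{u} R) (k : ℕ) : Prop :=
  k = 0 ∨ ∀ T : ModuleCat.{u} R, IsTransposeC R C M T →
    ∀ i : ℕ, 1 ≤ i → i ≤ k → Subsingleton (ExtM R T C i)

/-- `M` is a `C`-syzygy: it embeds into `P ⊗_R C` with `P` finite projective. -/
def IsCSyzygy (C M : ModuleCat.{u} R) : Prop :=
  ∃ (P : ModuleCat.{u} R), Module.Finite R ↥P ∧ Module.Projective R ↥P ∧
    ∃ f : ↥M →ₗ[R] (↥P ⊗[R] ↥C), Function.Injective f


/-- There is an exact sequence `0 → N → X_k → ⋯ → X_1 → M → 0` of finite `R`-modules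
with `Ext_R^i(X_j, C) = 0` for all `i > 0` and all `j`. -/
def ExtVanishingChain (C : ModuleCat.{u} R) : ℕ → ModuleCat.{u} R → ModuleCat.{u} R → Prop
  | 0, N, M => Nonempty (↥N ≃ₗ[R] ↥M)
  | k+1, N, M => ∃ (X K : ModuleCat.{u} R) (f : ↥K →ₗ[R] ↥X) (g : ↥X →ₗ[R] ↥M),
      Function.Injective f ∧ Function.Surjective g ∧
      LinearMap.ker g = LinearMap.range f ∧
      Module.Finite R ↥X ∧ (∀ i : ℕ, 0 < i → Subsingleton (ExtM R X C i)) ∧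
      ExtVanishingChain C k N K

/-! Let `⋯ → P₁ → P₀ → M → 0` be a resolution by finite projective modules. If `grade M ≥ n`, then
`Ext^i(M, C) = 0` for `i < n`: this follows from `R ≃ Hom(C, C)` by dividing out an element that is
regular on the second argument and annihilates `M`. Hence `0 → P₀^C → ⋯ → P_n^C → T → 0` is exact,
which bounds the dimension of `T` by `n`. Its `C`-dual is `P_n → ⋯ → P₀` again because `P^{CC} = P`,
so `Ext^i(T, C) = 0` for `0 < i < n`, while `Ext^n(T, C) = coker (P₁ → P₀) = M` is non-zero. -/

variable {R}

section ExtVanishes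

variable {A B N X Y Z : Type u} [AddCommGroup A] [Module R A] [AddCommGroup B] [Module R B]
  [AddCommGroup N] [Module R N] [AddCommGroup X] [Module R X] [AddCommGroup Y] [Module R Y]
  [AddCommGroup Z] [Module R Z] {i : ℕ}

/-- `Ext_R^i(A, Y) = 0`, for unbundled modules and Mathlib's `Abelian.Ext`, whose long exact
sequences are available. -/
def ExtVanishes (R : Type u) [CommRing R] (A Y : Type u) [AddCommGroup A] [Module R A]
    [AddCommGroup Y] [Module R Y] (i : ℕ) : Prop :=
  Subsingleton (Abelian.Ext (ModuleCat.of R A) (ModuleCat.of R Y) i)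

lemma extVanishes_iff_forall_eq_zero :
    ExtVanishes R A Y i ↔ ∀ x : Abelian.Ext (ModuleCat.of R A) (ModuleCat.of R Y) i, x = 0 :=
  subsingleton_iff_forall_eq 0

lemma extVanishes_zero_iff : ExtVanishes R A Y 0 ↔ Subsingleton (A →ₗ[R] Y) :=
  (Abelian.Ext.addEquiv₀.trans ModuleCat.homAddEquiv).subsingleton_congr

lemma extVanishes_of_sum_comp_eq {ι : Type*} [Fintype ι] (a : ι → A →ₗ[R] Z) (b : ι → Z →ₗ[R] A)
    (hab : ∑ j, b j ∘ₗ a j = LinearMap.id) (h : ExtVanishes R Z Y i) : ExtVanishes R A Y i := by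
  rw [extVanishes_iff_forall_eq_zero] at h ⊢
  intro x
  have id_eq_sum :
      𝟙 (ModuleCat.of R A) = ∑ j, ModuleCat.ofHom (a j) ≫ ModuleCat.ofHom (b j) := by
    ext1
    simp [ModuleCat.hom_sum, hab]
  rw [← Abelian.Ext.mk₀_id_comp x, id_eq_sum, Abelian.Ext.mk₀_sum, Abelian.Ext.sum_comp]
  refine Finset.sum_eq_zero fun j _ ↦ ?_
  rw [← Abelian.Ext.mk₀_comp_mk₀_assoc, h (Abelian.Ext.comp _ _ _), Abelian.Ext.comp_zero]

lemma extVanishes_congr_left (e : A ≃ₗ[R] Z) : ExtVanishes R A Y i ↔ ExtVanishes R Z Y i :=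
  (((Abelian.extFunctor i).mapIso e.toModuleIso.symm.op).app
    (ModuleCat.of R Y)).addCommGroupIsoToAddEquiv.subsingleton_congr

lemma extVanishes_congr_right (e : Y ≃ₗ[R] Z) : ExtVanishes R A Y i ↔ ExtVanishes R A Z i :=
  (((Abelian.extFunctor i).obj (.op (ModuleCat.of R A))).mapIso
    e.toModuleIso).addCommGroupIsoToAddEquiv.subsingleton_congr

lemma extVanishes_of_projective [Module.Projective R A] (hi : 0 < i) : ExtVanishes R A Y i := by
  obtain ⟨k, rfl⟩ := Nat.exists_eq_add_one_of_ne_zero hi.ne'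
  exact Abelian.Ext.subsingleton_of_projective _ _ k

end ExtVanishes

section ExtM

variable (M N : ModuleCat.{u} R) (i : ℕ)

lemma subsingleton_extM_iff_exactAt :
    Subsingleton (ExtM R M N i) ↔
      ((projectiveResolution M).complex.linearYonedaObj R N).ExactAt i := by
  rw [HomologicalComplex.exactAt_iff_isZero_homology,
    ← ((projectiveResolution M).isoExt (R := R) i N).isZero_iff]
  exact ModuleCat.isZero_iff_subsingleton.symm

lemma subsingleton_extM_zero_iff : Subsingleton (ExtM R M N 0) ↔ ExtVanishes R M N 0 := by
  let P := projectiveResolution M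
  let p : P.complex.X 0 ⟶ M := P.π.f 0
  have hp : Epi p := inferInstanceAs (Epi (P.π.f 0))
  have hdp : P.complex.d 1 0 ≫ p = 0 := P.complex_d_comp_π_f_zero
  have hexact : (ShortComplex.mk _ p hdp).Exact := P.exact₀
  rw [subsingleton_extM_iff_exactAt, HomologicalComplex.exactAt_iff' _ 0 0 1 (by simp) (by simp),
    ShortComplex.moduleCat_exact_iff, extVanishes_zero_iff,
    ← ModuleCat.homEquiv.subsingleton_congr, subsingleton_iff_forall_eq 0]
  constructor
  · intro h g
    have hcocycle : P.complex.d 1 0 ≫ p ≫ g = 0 := by rw [reassoc_of% hdp, Limits.zero_comp]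
    obtain ⟨x, hx⟩ : ∃ x : P.complex.X 0 ⟶ N, P.complex.d 0 0 ≫ x = p ≫ g := h _ hcocycle
    rw [← cancel_epi p, ← hx, P.complex.shape 0 0 (by simp), Limits.zero_comp, Limits.comp_zero]
  · intro h (f : P.complex.X 0 ⟶ N) hf
    refine ⟨0, ?_⟩
    rw [map_zero, ← hexact.g_desc f hf, h (hexact.desc f hf)]
    exact Limits.comp_zero.symm

lemma subsingleton_extM_succ_iff :
    Subsingleton (ExtM R M N (i + 1)) ↔ ExtVanishes R M N (i + 1) := by
  let P := projectiveResolution M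
  rw [subsingleton_extM_iff_exactAt,
    HomologicalComplex.exactAt_iff' _ i (i + 1) (i + 2) (by simp) (by simp),
    ShortComplex.moduleCat_exact_iff, extVanishes_iff_forall_eq_zero]
  constructor
  · intro h x
    obtain ⟨f, hf, rfl⟩ := P.extMk_surjective x (i + 2) rfl
    rw [P.extMk_eq_zero_iff f (i + 2) rfl hf i rfl]
    exact h f hf
  · intro h (f : P.complex.X (i + 1) ⟶ N) hf
    exact (P.extMk_eq_zero_iff f (i + 2) rfl hf i rfl).1 (h _)

lemma subsingleton_extM_iff : Subsingleton (ExtM R M N i) ↔ ExtVanishes R M N i := by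
  cases i with
  | zero => exact subsingleton_extM_zero_iff M N
  | succ i => exact subsingleton_extM_succ_iff M N i

end ExtM

section IsShortExact

variable {A B N X Y : Type u} [AddCommGroup A] [Module R A] [AddCommGroup B] [Module R B]
  [AddCommGroup N] [Module R N] [AddCommGroup X] [Module R X] [AddCommGroup Y] [Module R Y]
  {f : A →ₗ[R] B} {g : B →ₗ[R] N} {i : ℕ}

/-- The sequence `0 → A → B → N → 0` of unbundled modules given by `f` and `g` is exact. -/
structure IsShortExact (f : A →ₗ[R] B) (g : B →ₗ[R] N) : Prop where
  injective : Function.Injective f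
  exact : Function.Exact f g
  surjective : Function.Surjective g

namespace IsShortExact

lemma of_exact (hfg : Function.Exact f g) (hg : Function.Surjective g) :
    IsShortExact (LinearMap.range f).subtype g where
  injective := Subtype.val_injective
  exact := LinearMap.exact_iff.2 (by rw [Submodule.range_subtype, LinearMap.exact_iff.1 hfg])
  surjective := hg

lemma shortComplex_shortExact (h : IsShortExact f g) :
    (ModuleCat.shortComplexOfCompEqZero f g h.exact.linearMap_comp_eq_zero).ShortExact :=
  ModuleCat.shortComplex_shortExact _ h.exact h.injective h.surjective

lemma extVanishes_left (h : IsShortExact f g) (hN : ExtVanishes R N Y (i + 1))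
    (hB : ExtVanishes R B Y i) : ExtVanishes R A Y i := by
  rw [extVanishes_iff_forall_eq_zero] at *
  intro x
  obtain ⟨y, rfl⟩ := Abelian.Ext.contravariant_sequence_exact₁ h.shortComplex_shortExact _ x
    (add_comm 1 i) (hN _)
  rw [hB y, Abelian.Ext.comp_zero]

lemma extVanishes_right (h : IsShortExact f g) (hA : ExtVanishes R A Y i)
    (hB : ExtVanishes R B Y (i + 1)) : ExtVanishes R N Y (i + 1) := by
  rw [extVanishes_iff_forall_eq_zero] at *
  intro x
  obtain ⟨y, rfl⟩ := Abelian.Ext.contravariant_sequence_exact₃ h.shortComplex_shortExact _ x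
    (hB _) (add_comm 1 i)
  rw [hA y, Abelian.Ext.comp_zero]

lemma extVanishes_succ_iff (h : IsShortExact f g) (hB : ∀ j, 0 < j → ExtVanishes R B Y j)
    (hi : 0 < i) : ExtVanishes R N Y (i + 1) ↔ ExtVanishes R A Y i :=
  ⟨fun hN ↦ h.extVanishes_left hN (hB i hi), fun hA ↦ h.extVanishes_right hA (hB _ i.succ_pos)⟩

lemma surjective_lcomp (h : IsShortExact f g) (hN : ExtVanishes R N Y 1) :
    Function.Surjective (LinearMap.lcomp R Y f) := by
  intro ψ
  obtain ⟨y, hy⟩ := Abelian.Ext.contravariant_sequence_exact₁ h.shortComplex_shortExact _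
    (Abelian.Ext.mk₀ (ModuleCat.ofHom ψ)) (add_comm 1 0)
    (extVanishes_iff_forall_eq_zero.1 hN _)
  obtain ⟨χ, rfl⟩ := (Abelian.Ext.mk₀_bijective _ _).2 y
  rw [Abelian.Ext.mk₀_comp_mk₀] at hy
  exact ⟨χ.hom, congrArg ModuleCat.Hom.hom ((Abelian.Ext.mk₀_bijective _ _).1 hy)⟩

lemma extVanishes_one_iff (h : IsShortExact f g) (hB : ExtVanishes R B Y 1) :
    ExtVanishes R N Y 1 ↔ Function.Surjective (LinearMap.lcomp R Y f) := by
  refine ⟨h.surjective_lcomp, fun hsurj ↦ extVanishes_iff_forall_eq_zero.2 fun x ↦ ?_⟩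
  obtain ⟨y, rfl⟩ := Abelian.Ext.contravariant_sequence_exact₃ h.shortComplex_shortExact _ x
    (extVanishes_iff_forall_eq_zero.1 hB _) (add_comm 1 0)
  obtain ⟨ψ, rfl⟩ := (Abelian.Ext.mk₀_bijective _ _).2 y
  obtain ⟨χ, hχ⟩ := hsurj ψ.hom
  have hψ : ψ = ModuleCat.ofHom f ≫ ModuleCat.ofHom χ := by
    ext1
    exact hχ.symm
  rw [hψ, ← Abelian.Ext.mk₀_comp_mk₀]
  exact h.shortComplex_shortExact.extClass_comp_assoc _

lemma extVanishes_cokernel (h : IsShortExact f g) (hB : ExtVanishes R X B i)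
    (hA : ExtVanishes R X A (i + 1)) : ExtVanishes R X N i := by
  rw [extVanishes_iff_forall_eq_zero] at *
  intro x
  obtain ⟨y, rfl⟩ := Abelian.Ext.covariant_sequence_exact₃ _ h.shortComplex_shortExact x rfl (hA _)
  rw [hB y, Abelian.Ext.zero_comp]

lemma surjective_compRight (h : IsShortExact f g) (hA : ExtVanishes R X A 1) :
    Function.Surjective (LinearMap.compRight R (M := X) g) := by
  intro ψ
  obtain ⟨y, hy⟩ := Abelian.Ext.covariant_sequence_exact₃ _ h.shortComplex_shortExact
    (Abelian.Ext.mk₀ (ModuleCat.ofHom ψ)) (zero_add 1) (extVanishes_iff_forall_eq_zero.1 hA _)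
  obtain ⟨χ, rfl⟩ := (Abelian.Ext.mk₀_bijective _ _).2 y
  rw [Abelian.Ext.mk₀_comp_mk₀] at hy
  exact ⟨χ.hom, congrArg ModuleCat.Hom.hom ((Abelian.Ext.mk₀_bijective _ _).1 hy)⟩

lemma compRight (h : IsShortExact f g) (hA : ExtVanishes R X A 1) :
    IsShortExact (LinearMap.compRight R (M := X) f) (LinearMap.compRight R (M := X) g) where
  injective _ _ hφ := (LinearMap.cancel_left h.injective).1 hφ
  exact φ := by
    constructor
    · intro hφ
      have hlift (x : X) : ∃ a, f a = φ x := (h.exact _).1 (LinearMap.congr_fun hφ x)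
      exact ⟨φ.codLift f h.injective hlift, φ.comp_codLift f h.injective hlift⟩
    · rintro ⟨ψ, rfl⟩
      ext x
      exact h.exact.apply_apply_eq_zero (ψ x)
  surjective := h.surjective_compRight hA

end IsShortExact

end IsShortExact

section Grade

variable {B C M : Type u} [AddCommGroup B] [Module R B] [AddCommGroup C] [Module R C]
  [AddCommGroup M] [Module R M] {x : R}

open scoped Pointwise in
lemma isShortExact_lsmul (hx : IsSMulRegular B x) :
    IsShortExact (LinearMap.lsmul R B x) (x • (⊤ : Submodule R B)).mkQ where
  injective := hx
  exact := LinearMap.exact_lsmul_mkQ_smul_top B x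
  surjective := Submodule.mkQ_surjective _

lemma extVanishes_succ_of_quotSMulTop {i : ℕ} (hxM : x ∈ Module.annihilator R M)
    (hxB : IsSMulRegular B x) (h : ExtVanishes R M (QuotSMulTop x B) i) :
    ExtVanishes R M B (i + 1) := by
  have smul_id_eq_zero : x • 𝟙 (ModuleCat.of R M) = 0 := by
    ext m
    exact Module.mem_annihilator.1 hxM m
  refine extVanishes_iff_forall_eq_zero.2 fun e ↦ ?_
  have smul_comp_eq_zero :
      e.comp (Abelian.Ext.mk₀ (x • 𝟙 (ModuleCat.of R B))) (add_zero (i + 1)) = 0 :=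
    calc
      _ = (Abelian.Ext.mk₀ (x • 𝟙 (ModuleCat.of R M))).comp e (zero_add (i + 1)) := by
        simp [Abelian.Ext.mk₀_smul]
      _ = 0 := by rw [smul_id_eq_zero, Abelian.Ext.mk₀_zero, Abelian.Ext.zero_comp]
  obtain ⟨y, rfl⟩ := Abelian.Ext.covariant_sequence_exact₁ _
    (isShortExact_lsmul hxB).shortComplex_shortExact e smul_comp_eq_zero rfl
  rw [extVanishes_iff_forall_eq_zero.1 h y, Abelian.Ext.zero_comp]

variable [IsNoetherianRing R] [Module.Finite R C] [FaithfulSMul R C]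

lemma subsingleton_of_subsingleton_linearMap_of_faithfulSMul [Module.Finite R B]
    (h : Subsingleton (C →ₗ[R] B)) : Subsingleton B := by
  obtain ⟨r, hr, hreg⟩ := IsSMulRegular.subsingleton_linearMap_iff.1 h
  rw [Module.annihilator_eq_bot.2 ‹_›, Submodule.mem_bot] at hr
  exact IsSMulRegular.zero_iff_subsingleton.1 (hr ▸ hreg)

theorem extVanishes_of_extVanishes_linearMap [Module.Finite R M] [Module.Finite R B] {n : ℕ}
    (hCB : ∀ i, 0 < i → ExtVanishes R C B i)
    (hM : ∀ i < n, ExtVanishes R M (C →ₗ[R] B) i) : ∀ i < n, ExtVanishes R M B i := by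
  induction n generalizing B with
  | zero => exact fun i hi ↦ absurd hi i.not_lt_zero
  | succ n ih =>
    have hMB : Subsingleton (M →ₗ[R] B) := by
      have : Subsingleton (C →ₗ[R] M →ₗ[R] B) :=
        (LinearMap.lflip (R₀ := R)).toEquiv.subsingleton_congr.1
          (extVanishes_zero_iff.1 (hM 0 n.succ_pos))
      exact subsingleton_of_subsingleton_linearMap_of_faithfulSMul this
    obtain ⟨x, hxM, hxB⟩ := IsSMulRegular.subsingleton_linearMap_iff.1 hMB
    have hses := isShortExact_lsmul hxB
    have hquot : ∀ i < n, ExtVanishes R M (QuotSMulTop x B) i := by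
      refine ih (fun i hi ↦ hses.extVanishes_cokernel (hCB i hi) (hCB _ i.succ_pos)) fun i hi ↦ ?_
      exact (hses.compRight (hCB 1 one_pos)).extVanishes_cokernel (hM i (by lia))
        (hM (i + 1) (by lia))
    rintro (_ | i) hi
    · exact extVanishes_zero_iff.2 hMB
    · exact extVanishes_succ_of_quotSMulTop hxM hxB (hquot i (by lia))

end Grade

section Semidualizing

variable {C : ModuleCat.{u} R} {M P : Type u} [AddCommGroup M] [Module R M]
  [AddCommGroup P] [Module R P]

lemma exists_sum_smulRight_eq_id (R P : Type u) [CommRing R] [AddCommGroup P] [Module R P]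
    [Module.Finite R P] [Module.Projective R P] :
    ∃ (m : ℕ) (φ : Fin m → P →ₗ[R] R) (e : Fin m → P),
      ∑ j, (φ j).smulRight (e j) = LinearMap.id := by
  obtain ⟨m, f, g, -, -, hfg⟩ := Module.Finite.exists_comp_eq_id_of_projective R P
  refine ⟨m, fun j ↦ LinearMap.proj j ∘ₗ g, fun j ↦ f (Pi.single j 1), LinearMap.ext fun x ↦ ?_⟩
  conv_rhs => rw [← hfg, LinearMap.comp_apply, pi_eq_sum_univ' (g x), map_sum]
  simp

lemma sum_smulRightₗ_comp_applyₗ_eq_id (C : ModuleCat.{u} R) {m : ℕ} {φ : Fin m → P →ₗ[R] R}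
    {e : Fin m → P} (hφe : ∑ j, (φ j).smulRight (e j) = LinearMap.id) :
    ∑ j, (LinearMap.smulRightₗ (φ j) : C →ₗ[R] P →ₗ[R] C) ∘ₗ LinearMap.applyₗ (e j) =
      LinearMap.id := by
  ext f x
  have hx : ∑ j, φ j x • e j = x := by simpa using LinearMap.congr_fun hφe x
  conv_rhs => rw [LinearMap.id_apply, ← hx, map_sum]
  simp

lemma bijective_bidualityMap_dual {A : ModuleCat.{u} R}
    (hA : Function.Bijective (bidualityMap R C A)) :
    Function.Bijective (bidualityMap R C (ModuleCat.of R (A →ₗ[R] C))) := by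
  have eq_precomp_symm : bidualityMap R C (ModuleCat.of R (A →ₗ[R] C)) =
      ((LinearEquiv.ofBijective _ hA).arrowCongr (.refl R C)).toLinearMap := by
    ext f ψ
    obtain ⟨a, rfl⟩ := hA.2 ψ
    simp [bidualityMap]
  rw [eq_precomp_symm]
  exact LinearEquiv.bijective _

lemma isSemidualizing_self : IsSemidualizing R (ModuleCat.of R R) := by
  refine ⟨inferInstanceAs (Module.Finite R R), ⟨fun r s hrs ↦ ?_, fun f ↦ ⟨f (1 : R), ?_⟩⟩,
    fun i hi ↦ (subsingleton_extM_iff _ _ _).2 (extVanishes_of_projective hi)⟩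
  · simpa using LinearMap.congr_fun hrs (1 : R)
  · ext
    simp

namespace IsSemidualizing

lemma extVanishes (hC : IsSemidualizing R C) {i : ℕ} (hi : 0 < i) : ExtVanishes R C C i :=
  (subsingleton_extM_iff C C i).1 (hC.2.2 i hi)

lemma faithfulSMul (hC : IsSemidualizing R C) : FaithfulSMul R C :=
  ⟨fun h ↦ hC.2.1.1 (LinearMap.ext h)⟩

/-- The homothety isomorphism `R ≃ Hom_R(C, C)`. -/
def homothetyEquiv (hC : IsSemidualizing R C) : R ≃ₗ[R] (C →ₗ[R] C) :=
  LinearEquiv.ofBijective (LinearMap.lsmul R C) hC.2.1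

lemma extVanishes_of_extVanishes_self [IsNoetherianRing R] [Module.Finite R M]
    (hC : IsSemidualizing R C) {n : ℕ}
    (hM : ∀ i < n, ExtVanishes R M R i) : ∀ i < n, ExtVanishes R M C i := by
  have := hC.1
  have := hC.faithfulSMul
  exact extVanishes_of_extVanishes_linearMap (C := C) (fun i hi ↦ hC.extVanishes hi)
    fun i hi ↦ (extVanishes_congr_right hC.homothetyEquiv).1 (hM i hi)

lemma extVanishes_dual (hC : IsSemidualizing R C) (P : Type u) [AddCommGroup P] [Module R P]
    [Module.Finite R P] [Module.Projective R P] {i : ℕ} (hi : 0 < i) :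
    ExtVanishes R (P →ₗ[R] C) C i := by
  obtain ⟨m, φ, e, hφe⟩ := exists_sum_smulRight_eq_id R P
  exact extVanishes_of_sum_comp_eq _ _ (sum_smulRightₗ_comp_applyₗ_eq_id C hφe) (hC.extVanishes hi)

lemma injective_bidualityMap (hC : IsSemidualizing R C) (P : ModuleCat.{u} R)
    [Module.Finite R P] [Module.Projective R P] :
    Function.Injective (bidualityMap R C P) := by
  have := hC.faithfulSMul
  obtain ⟨m, φ, e, hφe⟩ := exists_sum_smulRight_eq_id R P
  refine (injective_iff_map_eq_zero _).2 fun x hx ↦ ?_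
  have hφx (j : Fin m) : φ j x = 0 := FaithfulSMul.eq_of_smul_eq_smul (α := C) fun c ↦ by
    rw [zero_smul]
    exact LinearMap.congr_fun hx (LinearMap.smulRightₗ (φ j) c)
  simpa [hφx] using (LinearMap.congr_fun hφe x).symm

lemma bijective_bidualityMap (hC : IsSemidualizing R C) (P : ModuleCat.{u} R)
    [Module.Finite R P] [Module.Projective R P] :
    Function.Bijective (bidualityMap R C P) := by
  refine ⟨hC.injective_bidualityMap P, fun ψ ↦ ?_⟩
  obtain ⟨m, φ, e, hφe⟩ := exists_sum_smulRight_eq_id R P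
  let r (j : Fin m) : R := hC.homothetyEquiv.symm (ψ ∘ₗ LinearMap.smulRightₗ (φ j))
  have hr (j : Fin m) (c : C) : r j • c = ψ (LinearMap.smulRightₗ (φ j) c) :=
    LinearMap.congr_fun (hC.homothetyEquiv.apply_symm_apply _) c
  refine ⟨∑ j, r j • e j, LinearMap.ext fun f ↦ ?_⟩
  have hf := congrArg ψ (LinearMap.congr_fun (sum_smulRightₗ_comp_applyₗ_eq_id C hφe) f)
  simpa [bidualityMap, hr] using hf

end IsSemidualizing

lemma IsSemidualizing.isTotallyCReflexive_dual [IsNoetherianRing R] (hC : IsSemidualizing R C)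
    (P : ModuleCat.{u} R) [Module.Finite R P] [Module.Projective R P] :
    IsTotallyCReflexive R C (ModuleCat.of R (P →ₗ[R] C)) := by
  have := hC.1
  have hbij := hC.bijective_bidualityMap P
  simp only [IsTotallyCReflexive, subsingleton_extM_iff]
  exact ⟨inferInstanceAs (Module.Finite R (P →ₗ[R] C)), bijective_bidualityMap_dual hbij,
    fun i hi ↦ hC.extVanishes_dual P hi, fun i hi ↦
      (extVanishes_congr_left (LinearEquiv.ofBijective _ hbij)).1 (extVanishes_of_projective hi)⟩

end Semidualizing

section Transpose

variable {C M S K T P : ModuleCat.{u} R} {Y : Type u} [AddCommGroup Y] [Module R Y] {k : ℕ}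

/-- `S` is a `k`-th syzygy of `M` in some resolution by finite projective modules, not
necessarily the minimal one. -/
def IsProjectiveSyzygy : ℕ → ModuleCat.{u} R → ModuleCat.{u} R → Prop
  | 0, M, S => Nonempty (S ≃ₗ[R] M)
  | k + 1, M, S => ∃ (K P : ModuleCat.{u} R) (f : S →ₗ[R] P) (g : P →ₗ[R] K),
      IsProjectiveSyzygy k M K ∧ Module.Finite R P ∧ Module.Projective R P ∧ IsShortExact f g

/-- `T` is the cokernel of the `C`-dual of a presentation of `S` by finite projective modules, not
necessarily the minimal one. -/
def IsProjectiveTranspose (C S T : ModuleCat.{u} R) : Prop :=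
  ∃ (P₁ P₀ : ModuleCat.{u} R) (d : P₁ →ₗ[R] P₀) (p : P₀ →ₗ[R] S) (q : (P₁ →ₗ[R] C) →ₗ[R] T),
    Module.Finite R P₁ ∧ Module.Projective R P₁ ∧ Module.Finite R P₀ ∧ Module.Projective R P₀ ∧
      Function.Exact d p ∧ Function.Surjective p ∧
      Function.Exact (LinearMap.lcomp R C d) q ∧ Function.Surjective q

lemma IsNthSyzygy.isProjectiveSyzygy (hS : IsNthSyzygy R k M S) : IsProjectiveSyzygy k M S := by
  induction k generalizing S with
  | zero => exact hS
  | succ k ih =>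
    obtain ⟨K, hK, P, g, hP, ⟨hPproj, hg, -⟩, ⟨e⟩⟩ := hS
    refine ⟨K, P, (LinearMap.ker g).subtype ∘ₗ e.toLinearMap, g, ih hK, hP, hPproj,
      Subtype.val_injective.comp e.injective, ?_, hg⟩
    exact LinearMap.exact_iff.2 (by rw [LinearEquiv.range_comp, Submodule.range_subtype])

lemma IsTransposeC.isProjectiveTranspose (hT : IsTransposeC R C S T) :
    IsProjectiveTranspose C S T := by
  obtain ⟨P₁, P₀, d, p, ⟨hP₁, hP₀, ⟨hP₀proj, hp, -⟩, hdp, hP₁proj, -⟩, ⟨e⟩⟩ := hT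
  refine ⟨P₁, P₀, d, p, e.symm.toLinearMap ∘ₗ (LinearMap.range (LinearMap.lcomp R C d)).mkQ,
    hP₁, hP₁proj, hP₀, hP₀proj, LinearMap.exact_iff.2 hdp.symm, hp, LinearMap.exact_iff.2 ?_,
    e.symm.surjective.comp (Submodule.mkQ_surjective _)⟩
  rw [LinearEquiv.ker_comp, Submodule.ker_mkQ]

lemma IsProjectiveSyzygy.extVanishes_iff (hS : IsProjectiveSyzygy k M S) {i : ℕ} (hi : 0 < i) :
    ExtVanishes R S Y i ↔ ExtVanishes R M Y (i + k) := by
  induction k generalizing S i with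
  | zero =>
    obtain ⟨e⟩ := hS
    exact extVanishes_congr_left e
  | succ k ih =>
    obtain ⟨K, P, f, g, hK, -, hPproj, hfg⟩ := hS
    rw [← hfg.extVanishes_succ_iff (fun j hj ↦ extVanishes_of_projective hj) hi,
      ih hK i.succ_pos, Nat.succ_add_eq_add_succ]

lemma injective_bidualityMap_of_injective (f : S →ₗ[R] P) (hf : Function.Injective f)
    (hP : Function.Injective (bidualityMap R C P)) : Function.Injective (bidualityMap R C S) := by
  have naturality : bidualityMap R C P ∘ₗ f =
      LinearMap.lcomp R C (LinearMap.lcomp R C f) ∘ₗ bidualityMap R C S := rfl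
  have hinj : Function.Injective (bidualityMap R C P ∘ₗ f) := hP.comp hf
  rw [naturality, LinearMap.coe_comp] at hinj
  exact hinj.of_comp

lemma exact_rangeRestrict {X Z : Type u} [AddCommGroup X] [Module R X] [AddCommGroup Z]
    [Module R Z] {f : X →ₗ[R] Y} {g : Y →ₗ[R] Z} (hfg : Function.Exact f g) :
    Function.Exact f g.rangeRestrict :=
  LinearMap.exact_iff.2 (by rw [LinearMap.ker_rangeRestrict, LinearMap.exact_iff.1 hfg])

lemma IsProjectiveTranspose.exists_isShortExact_of_subsingleton
    (hT : IsProjectiveTranspose C S T) (hS : Subsingleton (S →ₗ[R] C)) :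
    ∃ (P₁ P₀ : ModuleCat.{u} R) (f : (P₀ →ₗ[R] C) →ₗ[R] P₁ →ₗ[R] C) (q : (P₁ →ₗ[R] C) →ₗ[R] T),
      Module.Finite R P₁ ∧ Module.Projective R P₁ ∧ Module.Finite R P₀ ∧ Module.Projective R P₀ ∧
        IsShortExact f q := by
  obtain ⟨P₁, P₀, d, p, q, hP₁, hP₁proj, hP₀, hP₀proj, hdp, hp, hdq, hq⟩ := hT
  refine ⟨P₁, P₀, LinearMap.lcomp R C d, q, hP₁, hP₁proj, hP₀, hP₀proj, ?_, hdq, hq⟩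
  refine (injective_iff_map_eq_zero _).2 fun ψ hψ ↦ ?_
  obtain ⟨χ, rfl⟩ := (LinearMap.exact_lcomp_of_exact_of_surjective C hdp hp ψ).1 hψ
  rw [Subsingleton.elim χ 0, map_zero]

lemma IsProjectiveTranspose.exists_isShortExact (hT : IsProjectiveTranspose C S T)
    [Module.Finite R P] [Module.Projective R P] {f : S →ₗ[R] P} {g : P →ₗ[R] K}
    (hfg : IsShortExact f g) (hK : ExtVanishes R K C 1) :
    ∃ (P₁ D : ModuleCat.{u} R) (j : D →ₗ[R] P₁ →ₗ[R] C) (q : (P₁ →ₗ[R] C) →ₗ[R] T),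
      Module.Finite R P₁ ∧ Module.Projective R P₁ ∧ IsProjectiveTranspose C K D ∧
        IsShortExact j q := by
  obtain ⟨P₁, P₀, d, p, q, hP₁, hP₁proj, hP₀, hP₀proj, hdp, hp, hdq, hq⟩ := hT
  let dC := LinearMap.lcomp R C d
  have exact_comp : Function.Exact (f ∘ₗ p) g := (hp.comp_exact_iff_exact).2 hfg.exact
  have exact_lcomp : Function.Exact (LinearMap.lcomp R C (f ∘ₗ p)) dC.rangeRestrict := by
    have lcomp_comp :
        LinearMap.lcomp R C (f ∘ₗ p) = LinearMap.lcomp R C p ∘ₗ LinearMap.lcomp R C f := rfl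
    rw [lcomp_comp]
    exact ((hfg.surjective_lcomp hK).comp_exact_iff_exact).2
      (exact_rangeRestrict (LinearMap.exact_lcomp_of_exact_of_surjective C hdp hp))
  refine ⟨P₁, ModuleCat.of R (LinearMap.range dC), (LinearMap.range dC).subtype, q, hP₁, hP₁proj,
    ⟨P₀, P, f ∘ₗ p, g, dC.rangeRestrict, hP₀, hP₀proj, ‹_›, ‹_›, exact_comp, hfg.surjective,
      exact_lcomp, dC.surjective_rangeRestrict⟩, .of_exact hdq hq⟩

lemma IsProjectiveTranspose.extVanishes_one_iff (hC : IsSemidualizing R C)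
    (hT : IsProjectiveTranspose C S T) :
    ExtVanishes R T C 1 ↔ Function.Injective (bidualityMap R C S) := by
  obtain ⟨P₁, P₀, d, p, q, hP₁, hP₁proj, hP₀, hP₀proj, hdp, hp, hdq, hq⟩ := hT
  let dC := LinearMap.lcomp R C d
  let r := dC.rangeRestrict
  have exact_bidual : Function.Exact (LinearMap.lcomp R C r)
      (LinearMap.lcomp R C (LinearMap.lcomp R C p)) :=
    LinearMap.exact_lcomp_of_exact_of_surjective C
      (exact_rangeRestrict (LinearMap.exact_lcomp_of_exact_of_surjective C hdp hp))
      dC.surjective_rangeRestrict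
  -- Since `P^{CC} = P`, maps `range dC → C` correspond to the `x : P₀` with `p x` in the kernel of
  -- `S → S^{CC}`, and those that extend to `P₁^C` to the `x` in the range of `d`.
  rw [(IsShortExact.of_exact hdq hq).extVanishes_one_iff (hC.extVanishes_dual P₁ one_pos),
    injective_iff_map_eq_zero]
  constructor
  · intro hext s hs
    obtain ⟨x, rfl⟩ := hp s
    obtain ⟨φ, hφ⟩ := (exact_bidual (bidualityMap R C P₀ x)).1 hs
    obtain ⟨ψ, rfl⟩ := hext φ
    obtain ⟨y, rfl⟩ := (hC.bijective_bidualityMap P₁).2 ψ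
    rw [← hC.injective_bidualityMap P₀ hφ]
    exact hdp.apply_apply_eq_zero y
  · intro hinj φ
    obtain ⟨x, hx⟩ := (hC.bijective_bidualityMap P₀).2 (LinearMap.lcomp R C r φ)
    have hpx : p x = 0 := hinj _ ((congrArg _ hx).trans (exact_bidual.apply_apply_eq_zero φ))
    obtain ⟨y, rfl⟩ := (hdp x).1 hpx
    exact ⟨bidualityMap R C P₁ y, LinearMap.lcomp_injective_of_surjective r
      dC.surjective_rangeRestrict hx⟩

theorem IsProjectiveTranspose.extVanishes_succ_iff_lt (hC : IsSemidualizing R C) [Nontrivial M]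
    (hM : ∀ i ≤ k, ExtVanishes R M C i) (hS : IsProjectiveSyzygy k M S)
    (hT : IsProjectiveTranspose C S T) {i : ℕ} (hi : i ≤ k) :
    ExtVanishes R T C (i + 1) ↔ i < k := by
  induction k generalizing S T i with
  | zero =>
    obtain rfl : i = 0 := Nat.le_zero.1 hi
    obtain ⟨e⟩ := hS
    have : Nontrivial S := e.toEquiv.nontrivial
    have : Subsingleton (S →ₗ[R] C) :=
      extVanishes_zero_iff.1 ((extVanishes_congr_left e).2 (hM 0 le_rfl))
    rw [hT.extVanishes_one_iff hC, iff_false_right (lt_irrefl 0)]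
    exact fun hinj ↦ not_subsingleton S hinj.subsingleton
  | succ k ih =>
    obtain ⟨K, P, f, g, hK, hP, hPproj, hfg⟩ := hS
    cases i with
    | zero =>
      simpa [hT.extVanishes_one_iff hC] using
        injective_bidualityMap_of_injective f hfg.injective (hC.injective_bidualityMap P)
    | succ i =>
      have hKC : ExtVanishes R K C 1 :=
        (hK.extVanishes_iff one_pos).2 (hM (1 + k) (add_comm 1 k).le)
      obtain ⟨P₁, D, j, q, hP₁, hP₁proj, hD, hjq⟩ := hT.exists_isShortExact hfg hKC
      rw [hjq.extVanishes_succ_iff (fun j hj ↦ hC.extVanishes_dual P₁ hj) i.succ_pos,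
        ih (fun i hi ↦ hM i (hi.trans k.le_succ)) hK hD (Nat.le_of_succ_le_succ hi),
        Nat.succ_lt_succ_iff]

end Transpose

section Resolution

variable {C M S T : ModuleCat.{u} R} {𝒳 : ModuleCat.{u} R → Prop} {n k : ℕ}

/-- There is an exact sequence `0 → X_n → ⋯ → X_0 → M → 0` with all `X_i` in the class `𝒳`; this
treats `gcdimLE` and `pdimLE` uniformly. -/
def ResolutionDimLE (𝒳 : ModuleCat.{u} R → Prop) : ℕ → ModuleCat.{u} R → Prop
  | 0, M => 𝒳 M
  | n + 1, M => ∃ (X K : ModuleCat.{u} R) (f : K →ₗ[R] X) (g : X →ₗ[R] M),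
      IsShortExact f g ∧ 𝒳 X ∧ ResolutionDimLE 𝒳 n K

lemma isShortExact_iff {K X : ModuleCat.{u} R} {f : K →ₗ[R] X} {g : X →ₗ[R] M} :
    IsShortExact f g ↔ Function.Injective f ∧ Function.Surjective g ∧
      LinearMap.ker g = LinearMap.range f :=
  ⟨fun h ↦ ⟨h.injective, h.surjective, LinearMap.exact_iff.1 h.exact⟩,
    fun ⟨hf, hg, hfg⟩ ↦ ⟨hf, LinearMap.exact_iff.2 hfg, hg⟩⟩

lemma gcdimLE_iff_resolutionDimLE :
    gcdimLE R C n M ↔ ResolutionDimLE (IsTotallyCReflexive R C) n M := by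
  induction n generalizing M with
  | zero => rfl
  | succ n ih => simp only [gcdimLE, ResolutionDimLE, isShortExact_iff, ih, and_assoc]

lemma pdimLE_iff_resolutionDimLE :
    pdimLE R n M ↔ ResolutionDimLE (fun P : ModuleCat.{u} R ↦ Module.Projective R P) n M := by
  induction n generalizing M with
  | zero => rfl
  | succ n ih => simp only [pdimLE, ResolutionDimLE, isShortExact_iff, ih, and_assoc]

lemma ResolutionDimLE.extVanishes {Y : Type u} [AddCommGroup Y] [Module R Y]
    (h𝒳 : ∀ X, 𝒳 X → ∀ i, 0 < i → ExtVanishes R X Y i) (hM : ResolutionDimLE 𝒳 n M) {i : ℕ}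
    (hi : n < i) : ExtVanishes R M Y i := by
  induction n generalizing M i with
  | zero => exact h𝒳 M hM i hi
  | succ n ih =>
    obtain ⟨X, K, f, g, hfg, hX, hK⟩ := hM
    obtain ⟨i, rfl⟩ := Nat.exists_eq_add_one_of_ne_zero (Nat.ne_zero_of_lt hi)
    exact hfg.extVanishes_right (ih hK (Nat.lt_of_succ_lt_succ hi)) (h𝒳 X hX _ i.succ_pos)

lemma IsProjectiveTranspose.resolutionDimLE
    (hdual : ∀ P : ModuleCat.{u} R, Module.Finite R P → Module.Projective R P →
      𝒳 (ModuleCat.of R (P →ₗ[R] C)))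
    (hM : ∀ i ≤ k, ExtVanishes R M C i) (hS : IsProjectiveSyzygy k M S)
    (hT : IsProjectiveTranspose C S T) : ResolutionDimLE 𝒳 (k + 1) T := by
  induction k generalizing S T with
  | zero =>
    obtain ⟨e⟩ := hS
    have hSC := extVanishes_zero_iff.1 ((extVanishes_congr_left e).2 (hM 0 le_rfl))
    obtain ⟨P₁, P₀, f, q, hP₁, hP₁proj, hP₀, hP₀proj, hfq⟩ :=
      hT.exists_isShortExact_of_subsingleton hSC
    exact ⟨_, _, f, q, hfq, hdual P₁ hP₁ hP₁proj, hdual P₀ hP₀ hP₀proj⟩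
  | succ k ih =>
    obtain ⟨K, P, f, g, hK, hP, hPproj, hfg⟩ := hS
    have hKC : ExtVanishes R K C 1 :=
      (hK.extVanishes_iff one_pos).2 (hM (1 + k) (add_comm 1 k).le)
    obtain ⟨P₁, D, j, q, hP₁, hP₁proj, hD, hjq⟩ := hT.exists_isShortExact hfg hKC
    exact ⟨_, D, j, q, hjq, hdual P₁ hP₁ hP₁proj,
      ih (fun i hi ↦ hM i (hi.trans k.le_succ)) hK hD⟩

theorem IsProjectiveTranspose.isLeast_resolutionDimLE (hC : IsSemidualizing R C) [Nontrivial M]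
    (h𝒳 : ∀ X, 𝒳 X → ∀ i, 0 < i → ExtVanishes R X C i)
    (hdual : ∀ P : ModuleCat.{u} R, Module.Finite R P → Module.Projective R P →
      𝒳 (ModuleCat.of R (P →ₗ[R] C)))
    (hM : ∀ i ≤ k, ExtVanishes R M C i) (hS : IsProjectiveSyzygy k M S)
    (hT : IsProjectiveTranspose C S T) : IsLeast {m | ResolutionDimLE 𝒳 m T} (k + 1) := by
  refine ⟨hT.resolutionDimLE hdual hM hS, fun m (hm : ResolutionDimLE 𝒳 m T) ↦ ?_⟩
  by_contra! hmk
  exact lt_irrefl k ((hT.extVanishes_succ_iff_lt hC hM hS le_rfl).1 (hm.extVanishes h𝒳 hmk))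

end Resolution

section Invariants

variable {C M S T : ModuleCat.{u} R} {k n : ℕ}

lemma sInf_image_natCast_eq {s : Set ℕ} (h : IsLeast s n) :
    sInf ((fun i : ℕ ↦ (i : ℕ∞)) '' s) = n :=
  (Nat.mono_cast.map_isLeast h).csInf_eq

lemma extVanishes_of_lt_gradeR (hM : (n : ℕ∞) ≤ gradeR R M) {i : ℕ} (hi : i < n) :
    ExtVanishes R M R i := by
  by_contra hne
  have hgrade : gradeR R M ≤ i := sInf_le ⟨i, mt (subsingleton_extM_iff _ _ _).1 hne, rfl⟩
  exact hi.not_ge (Nat.cast_le.1 (hM.trans hgrade))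

theorem IsProjectiveTranspose.gcdim_eq [IsNoetherianRing R] (hC : IsSemidualizing R C)
    [Nontrivial M] (hM : ∀ i ≤ k, ExtVanishes R M C i) (hS : IsProjectiveSyzygy k M S)
    (hT : IsProjectiveTranspose C S T) : gcdim R C T = (k + 1 : ℕ) := by
  simp only [gcdim, gcdimLE_iff_resolutionDimLE]
  exact sInf_image_natCast_eq <| hT.isLeast_resolutionDimLE hC
    (fun X hX i hi ↦ (subsingleton_extM_iff X C i).1 (hX.2.2.1 i hi))
    (fun P _ _ ↦ hC.isTotallyCReflexive_dual P) hM hS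

theorem IsProjectiveTranspose.pdim_eq [Nontrivial M] (hM : ∀ i ≤ k, ExtVanishes R M R i)
    (hS : IsProjectiveSyzygy k M S) (hT : IsProjectiveTranspose (ModuleCat.of R R) S T) :
    pdim R T = (k + 1 : ℕ) := by
  simp only [pdim, pdimLE_iff_resolutionDimLE]
  exact sInf_image_natCast_eq <| hT.isLeast_resolutionDimLE isSemidualizing_self
    (fun P _ i hi ↦ extVanishes_of_projective hi)
    (fun P _ _ ↦ inferInstanceAs (Module.Projective R (Module.Dual R P))) hM hS

theorem IsProjectiveTranspose.rgrade_eq (hC : IsSemidualizing R C) [Nontrivial M]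
    (hM : ∀ i ≤ k, ExtVanishes R M C i) (hS : IsProjectiveSyzygy k M S)
    (hT : IsProjectiveTranspose C S T) : rgrade R C T = (k + 1 : ℕ) := by
  simp only [rgrade, subsingleton_extM_iff]
  refine sInf_image_natCast_eq ⟨⟨k.succ_pos, fun h ↦ ?_⟩, fun i ⟨hi, hne⟩ ↦ ?_⟩
  · exact lt_irrefl k ((hT.extVanishes_succ_iff_lt hC hM hS le_rfl).1 h)
  · obtain ⟨i, rfl⟩ := Nat.exists_eq_add_one_of_ne_zero hi.ne'
    by_contra! hik
    have hik : i < k := Nat.lt_of_succ_lt_succ hik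
    exact hne ((hT.extVanishes_succ_iff_lt hC hM hS hik.le).2 hik)

end Invariants

variable (R)

theorem statement11_general [IsNoetherianRing R] {C : ModuleCat.{u} R} (hC : IsSemidualizing R C)
    {n : ℕ} (hn : 0 < n) {M : ModuleCat.{u} R} [Module.Finite R M] [Nontrivial M]
    (hgrade : (n : ℕ∞) ≤ gradeR R M) {S T : ModuleCat.{u} R}
    (hS : IsProjectiveSyzygy (n - 1) M S) :
    (IsProjectiveTranspose C S T → IsReducedGCPerfect R C T ∧ gcdim R C T = n) ∧
      (IsProjectiveTranspose (ModuleCat.of R R) S T → pdim R T = n) := by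
  obtain ⟨k, rfl⟩ := Nat.exists_eq_add_one_of_ne_zero hn.ne'
  have hMR (i : ℕ) (hi : i < k + 1) : ExtVanishes R M R i := extVanishes_of_lt_gradeR hgrade hi
  have hMC := hC.extVanishes_of_extVanishes_self hMR
  refine ⟨fun hT ↦ ?_, fun hT ↦ hT.pdim_eq (fun i hi ↦ hMR i (Nat.lt_succ_of_le hi)) hS⟩
  have hgcdim := hT.gcdim_eq hC (fun i hi ↦ hMC i (Nat.lt_succ_of_le hi)) hS
  have hrgrade := hT.rgrade_eq hC (fun i hi ↦ hMC i (Nat.lt_succ_of_le hi)) hS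
  exact ⟨⟨hgcdim.trans_ne (ENat.natCast_ne_top _), hrgrade.trans hgcdim.symm⟩, hgcdim⟩

/-- if `grade_R(M) ≥ n > 0` and `M ≠ 0` is finite, then
`T_n^C(M) = Tr_C(Ω^{n-1} M)` is reduced `G_C`-perfect of `G_C`-dimension `n`;
for `C = R` it has projective dimension `n`. -/
theorem statement11 [IsNoetherianRing R] (hsp : IsSemiperfectRing R)
    (C : ModuleCat.{u} R) (hC : IsSemidualizing R C)
    (n : ℕ) (hn : 0 < n)
    (M : ModuleCat.{u} R) (hMfin : Module.Finite R ↥M) (hM0 : Nontrivial ↥M)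
    (hgrade : (n : ℕ∞) ≤ gradeR R M) :
    (∀ S T : ModuleCat.{u} R, IsNthSyzygy R (n - 1) M S →
      IsTransposeC R C S T →
        IsReducedGCPerfect R C T ∧ gcdim R C T = n) ∧
    (∀ S T : ModuleCat.{u} R, IsNthSyzygy R (n - 1) M S →
      IsTransposeC R (ModuleCat.of R R) S T → pdim R T = n) := by
  have hgeneral {S T : ModuleCat.{u} R} (hS : IsNthSyzygy R (n - 1) M S) :=
    statement11_general R (T := T) hC hn hgrade hS.isProjectiveSyzygy
  exact ⟨fun S T hS hT ↦ (hgeneral hS).1 hT.isProjectiveTranspose,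
    fun S T hS hT ↦ (hgeneral hS).2 hT.isProjectiveTranspose⟩

end
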